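/- For every n ≥ 3 and every π ∈ NC(n,3), the mingarc statistic has the following closed form: if π has a triple block {a,b,c} with a<b<c then mingarc(π) = n − b − 1; if π has two pair blocks {a,b} and {c,d} with a<b<c<d (disjoint case) then mingarc(π) = 2n − b − d; and if π has two pair blocks {a,b} and {c,d} with a<c<d<b (nested case) then mingarc(π) = n − d − 1. Consequently, on NC(n,3), mingarc(π) = skew(flip(π)), where flip(π) is the noncrossing partition obtained from π by applying the map i ↦ n+1−i to every element. -/

import Mathlib

namespace QtN

/-! ### Lattice paths and parallelogram polyominoes -/

/-- A step of a lattice path: east or north. -/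
inductive Step : Type
  | E : Step
  | N : Step
  deriving DecidableEq, Repr

/-- Number of east steps of a path. -/
def countE (w : List Step) : ℕ := w.count Step.E

/-- Number of north steps of a path. -/
def countN (w : List Step) : ℕ := w.count Step.N

/-- Endpoint of a path started at the origin. -/
def pathPos (w : List Step) : ℕ × ℕ := (countE w, countN w)

/-- The set of lattice points visited by a path started at the origin. -/
def pathPts (w : List Step) : Finset (ℕ × ℕ) :=
  ((List.range (w.length + 1)).map (fun i => pathPos (w.take i))).toFinset

/-- `colHeightsAux w h`: for each east step of `w` (in order), the number of north
steps preceding it, starting with `h` north steps already performed. -/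
def colHeightsAux : List Step → ℕ → List ℕ
  | [], _ => []
  | Step.E :: r, h => h :: colHeightsAux r h
  | Step.N :: r, h => colHeightsAux r (h + 1)

/-- Height at which the path `w` crosses the vertical strip `i ≤ x ≤ i + 1`. -/
def colHeight (w : List Step) (i : ℕ) : ℕ := (colHeightsAux w 0).getD i 0

/-- A parallelogram polyomino of size `m × n`: a pair of monotone lattice paths from
`(0,0)` to `(m,n)` (east/north steps), the upper path staying weakly above the lower
path, and the two paths meeting only at `(0,0)` and `(m,n)`. -/
structure Polyomino (m n : ℕ) : Type where
  lower : List Step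
  upper : List Step
  lowerE : countE lower = m
  lowerN : countN lower = n
  upperE : countE upper = m
  upperN : countN upper = n
  above : ∀ i < m, colHeight lower i ≤ colHeight upper i
  meet : pathPts upper ∩ pathPts lower = {(0, 0), (m, n)}

/-- The area statistic: number of unit squares between the two paths,
minus `(m + n - 1)`. -/
def area {m n : ℕ} (P : Polyomino m n) : ℕ :=
  (∑ i ∈ Finset.range m, (colHeight P.upper i - colHeight P.lower i)) - (m + n - 1)

/-- Where an eastward run at height `y`, starting at `x`, first hits the lower path. -/
def eastTarget (hL : ℕ → ℕ) (m x y : ℕ) : ℕ :=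
  ((List.range m).filter (fun i => decide (x ≤ i ∧ y ≤ hL i))).headD m

/-- Total bounce contribution: from state `(x, y)` just after the `j`-th east-to-north
turn (counting the turns made so far), alternately go north until hitting the upper
path and east until hitting the lower path, each step contributing the number of
east-to-north turns preceding it. -/
def bounceAux (hU hL : ℕ → ℕ) (m n : ℕ) : ℕ → ℕ → ℕ → ℕ → ℕ
  | 0, _, _, _ => 0
  | fuel + 1, x, y, j =>
    if x = m ∧ y = n then 0
    else
      let y' := hU (x - 1)
      let x' := if y' = n then m else eastTarget hL m x y'
      (j + 1) * ((y' - y) + (x' - x)) + bounceAux hU hL m n fuel x' y' (j + 1)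

/-- The bounce statistic of a parallelogram polyomino: the bounce path starts with a
single east step (contributing `0`) and then alternates north runs (to the ceiling)
and east runs (to the floor); each step contributes the number of east-to-north turns
preceding it; finally `(m + n - 1)` is subtracted. -/
def bounce {m n : ℕ} (P : Polyomino m n) : ℕ :=
  bounceAux (colHeight P.upper) (colHeight P.lower) m n (m + n + 2) 1 0 0 - (m + n - 1)

/-! ### Set partitions and noncrossing partitions -/

/-- Maximum of a finite set of naturals (`0` for the empty set). -/
def fmax (β : Finset ℕ) : ℕ := β.sup id

/-- Minimum of a finite set of naturals (`0` for the empty set). -/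
def fmin (β : Finset ℕ) : ℕ := if h : β.Nonempty then β.min' h else 0

/-- A set partition of `{1, …, n}`, given by its finite set of blocks. -/
structure SetPartition (n : ℕ) : Type where
  blocks : Finset (Finset ℕ)
  not_empty_mem : ∅ ∉ blocks
  cover : ∀ i : ℕ, i ∈ Finset.Icc 1 n ↔ ∃ β ∈ blocks, i ∈ β
  disjoint : ∀ β ∈ blocks, ∀ γ ∈ blocks, β ≠ γ → Disjoint β γ

/-- A family of blocks is noncrossing if there are no `a < b < c < d` with
`a, c` in one block and `b, d` in a different block. -/
def IsNoncrossing (bs : Finset (Finset ℕ)) : Prop :=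
  ∀ a b c d : ℕ, a < b → b < c → c < d →
    ∀ β ∈ bs, ∀ γ ∈ bs, a ∈ β → c ∈ β → b ∈ γ → d ∈ γ → β = γ

/-- `NC n k`: noncrossing partitions of `{1, …, n}` with exactly `n - k + 1` blocks. -/
abbrev NC (n k : ℕ) : Type :=
  {P : SetPartition n // IsNoncrossing P.blocks ∧ P.blocks.card = n - k + 1}

/-- The skip statistic: `∑_{β} (max β - min β - |β| + 1)`. -/
def skip (bs : Finset (Finset ℕ)) : ℕ :=
  ∑ β ∈ bs, ((fmax β + 1 - fmin β) - β.card)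

/-- The non-singleton blocks of a partition. -/
def nsBlocks (bs : Finset (Finset ℕ)) : Finset (Finset ℕ) :=
  bs.filter (fun β => 2 ≤ β.card)

/-- The block of `bs` containing `x` (junk if there is not exactly one). -/
def blockContaining (bs : Finset (Finset ℕ)) (x : ℕ) : Finset ℕ :=
  (bs.filter (fun β => x ∈ β)).sup id

/-- For a noncrossing partition in `NC n 3`, the quadruple `(a, b, c, d)` describing its
non-singleton blocks: for two pair blocks `{a,b}` and `{c,d}` (with `a` the global
minimum) this is `(a, b, c, d)`; for a single triple block `{a, b, c}` (`a < b < c`)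
this is `(a, b, b, c)`. -/
def blockQuad (bs : Finset (Finset ℕ)) : ℕ × ℕ × ℕ × ℕ :=
  let A := blockContaining (nsBlocks bs) (fmin ((nsBlocks bs).sup id))
  if (nsBlocks bs).card = 1 then
    let l := A.sort (· ≤ ·)
    (l.getD 0 0, l.getD 1 0, l.getD 1 0, l.getD 2 0)
  else
    let B := ((nsBlocks bs).erase A).sup id
    (fmin A, fmax A, fmin B, fmax B)

/-- The leap statistic on `NC n 3`: `leap(ab|cd) = c - 2 + max(0, c - b)`,
and `leap({a,b,c}) = b - 2` (the case `b = c`). -/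
def leap (bs : Finset (Finset ℕ)) : ℕ :=
  let (_, b, c, _) := blockQuad bs
  (c - 2) + (c - b)

/-- The skew statistic on `NC n 3`: `skew(ab|cd) = c - 2 + a` if `b < c`, else `c - 2`;
`skew({a,b,c}) = b - 2` (the case `b = c`). -/
def skew (bs : Finset (Finset ℕ)) : ℕ :=
  let (a, b, c, _) := blockQuad bs
  if b < c then c - 2 + a else c - 2

/-- The mag statistic on `NC n 3`: `mag(ab|cd) = a + max(b, c) - 2 - ⌈(b - a)/2⌉`,
and `mag({a,b,c}) = a + b - 2 - ⌈(b - a)/2⌉` (the case `b = c`). -/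
def mag (bs : Finset (Finset ℕ)) : ℕ :=
  let (a, b, c, _) := blockQuad bs
  a + max b c - 2 - (b - a + 1) / 2

/-- The area statistic on noncrossing partitions:
`area(π) = ∑_{β, β' ∈ π} #{ i ∈ β' : i < max β < max β' }` (ordered pairs of blocks). -/
def ncArea (bs : Finset (Finset ℕ)) : ℕ :=
  ∑ β ∈ bs, ∑ γ ∈ bs, (γ.filter (fun i => i < fmax β ∧ fmax β < fmax γ)).card

/-- The elements of the non-singleton blocks, listed in increasing order, with
the middle element of a size-3 block listed twice. -/
def nsList (bs : Finset (Finset ℕ)) : List ℕ :=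
  let l := ((nsBlocks bs).sup id).sort (· ≤ ·)
  if l.length = 3 then [l.getD 0 0, l.getD 1 0, l.getD 1 0, l.getD 2 0] else l

/-- The multiset of block sizes of a partition. -/
def blockSizes (bs : Finset (Finset ℕ)) : Multiset ℕ := bs.val.map Finset.card

/-- The image of a partition of `{1, …, n}` under the flip `i ↦ n + 1 - i`. -/
def flipBlocks (n : ℕ) (bs : Finset (Finset ℕ)) : Finset (Finset ℕ) :=
  bs.image (fun β => β.image (fun i => n + 1 - i))

/-! ### The mingarc statistic -/

/-- The gaps `ν_r = m_{r+1} - m_r - 1` between consecutive block minima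
`m_1 < ⋯ < m_h` (with `m_{h+1} = n + 1`). -/
def nuList (n : ℕ) (bs : Finset (Finset ℕ)) : List ℕ :=
  let ms := ((bs.image fmin).sort (· ≤ ·)) ++ [n + 1]
  (List.range (bs.image fmin).card).map (fun r => ms.getD (r + 1) 0 - ms.getD r 0 - 1)

/-- Concatenation of `replicate ν c` over a list of pairs `(c, ν)`. -/
def repeatEach : List (ℕ × ℕ) → List ℕ
  | [] => []
  | p :: r => List.replicate p.2 p.1 ++ repeatEach r

/-- The right endpoints `y_1 ≤ ⋯ ≤ y_{k-1}`: each block maximum `c_r` repeated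
`ν_r` times, in increasing order. -/
def ysList (n : ℕ) (bs : Finset (Finset ℕ)) : List ℕ :=
  repeatEach (List.zip ((bs.image fmax).sort (· ≤ ·)) (nuList n bs))

/-- The left endpoints `x_1 < ⋯ < x_{k-1}`: the elements of `{1, …, n}` that are not
block maxima, in increasing order. -/
def xsList (n : ℕ) (bs : Finset (Finset ℕ)) : List ℕ :=
  ((Finset.Icc 1 n).filter (fun i => i ∉ bs.image fmax)).sort (· ≤ ·)

/-- Greedy left-to-right selection of arcs: keep the first arc, and thereafter keep the
earliest arc whose left endpoint exceeds the right endpoint of the last kept arc. -/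
def greedyArcs : List (ℕ × ℕ) → Option ℕ → List (ℕ × ℕ)
  | [], _ => []
  | a :: rest, none => a :: greedyArcs rest (some a.2)
  | a :: rest, some r =>
      if r < a.1 then a :: greedyArcs rest (some a.2) else greedyArcs rest (some r)

/-- The mingarc statistic: the sum of `n - y_i` over the greedily selected
candidate arcs `[x_i, y_i]`. -/
def mingarc (n : ℕ) (bs : Finset (Finset ℕ)) : ℕ :=
  ((greedyArcs (List.zip (xsList n bs) (ysList n bs)) none).map (fun p => n - p.2)).sum

/-! ### The map η from polyominoes to noncrossing partitions -/

/-- Largest column index `i < m` with `colHeight lower i ≤ j`: the rightmost cell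
adjacent to the floor in row `j`. -/
def eFloor {m k : ℕ} (P : Polyomino m k) (j : ℕ) : ℕ :=
  (((List.range m).filter (fun i => decide (colHeight P.lower i ≤ j))).getLastD 0)

/-- Smallest column index `i` with `colHeight upper i ≥ j + 1`: the leftmost cell
adjacent to the ceiling in row `j` (with default `m - 1`). -/
def fCeil {m k : ℕ} (P : Polyomino m k) (j : ℕ) : ℕ :=
  (((List.range m).filter (fun i => decide (j + 1 ≤ colHeight P.upper i))).headD (m - 1))

/-- The number of cells adjacent to the ceiling in row `j`. -/
def rowCount {m k : ℕ} (P : Polyomino m k) (j : ℕ) : ℕ :=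
  fCeil P (j + 1) - fCeil P j + 1

/-- Pick, `cnt` times, the largest label in `{1, …, L}` not used yet. -/
def pickRow : ℕ → ℕ → Finset ℕ → Finset ℕ
  | 0, _, _ => ∅
  | cnt + 1, L, used =>
      let x := fmax ((Finset.Icc 1 L) \ used)
      insert x (pickRow cnt L (insert x used))

/-- The blocks of `η(P)`: label the cells adjacent to the floor `1, …, n` going bottom
to top, left to right (the label of the floor cell in column `i`, row `j` is
`i + j + 1`, and the labels present in rows `≤ j` are exactly `1, …, eFloor P j + j + 1`);
then going bottom to top, left to right over the cells adjacent to the ceiling, assign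
to each the largest unused indexing label occurring in the same row or below; the
blocks are the label sets of the ceiling rows. -/
def etaBlocks {m k : ℕ} (P : Polyomino m k) : Finset (Finset ℕ) :=
  (((List.range k).foldl
      (fun st j =>
        let B := pickRow (rowCount P j) (eFloor P j + j + 1) st.1
        (st.1 ∪ B, B :: st.2))
      ((∅ : Finset ℕ), ([] : List (Finset ℕ)))).2).toFinset

/-!
Let `z` be a non-minimum with exactly `r` block minima below it, that is, `m_r < z < m_{r+1}`. Then
the candidate arc indexed by `z` ends at the `r`-th block maximum `c_r`, because `c_r` is repeated
`ν_r = m_{r+1} - m_r - 1` times. So the candidate arcs depend only on the non-maxima and the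
non-minima, and these in turn only on the non-singleton blocks.

For `k = 3` the numbers `|β| - 1` sum to `2`, so the non-singleton blocks are one triple or two
pairs, and there are two non-maxima `p < q` and two non-minima `r < s`. Counting the maxima below a
given point as the complement of the non-maxima shows that the candidate arcs are `[p, y]` and
`[q, s]`, with `y = r` if `r < q` and `y = r + 1` if `q ≤ r`. The second arc is kept exactly when
`r < q`, which holds only for two disjoint pairs.
-/

section Nth

variable {α : Type*} {p : ℕ → Prop} [DecidablePred p] {j k z : ℕ}

theorem count_eq_of_nth_lt_of_le_nth_succ
    (hj : ∀ hf : (Set.ofPred p).Finite, j + 1 < hf.toFinset.card)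
    (hz : Nat.nth p j < z) (hz' : z ≤ Nat.nth p (j + 1)) : Nat.count p z = j + 1 := by
  apply le_antisymm
  · simpa only [Nat.count_nth hj] using Nat.count_monotone p hz'
  · simpa only [Nat.count_nth_succ fun hf ↦ (Nat.lt_succ_self j).trans (hj hf)]
      using Nat.count_monotone p (Nat.succ_le_of_lt hz)

theorem filter_not_Ico_nth_succ (hj : ∀ hf : (Set.ofPred p).Finite, j + 1 < hf.toFinset.card) :
    (List.Ico (Nat.nth p j) (Nat.nth p (j + 1))).filter (¬ p ·) =
      List.Ico (Nat.nth p j + 1) (Nat.nth p (j + 1)) := by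
  have hmem : p (Nat.nth p j) := Nat.nth_mem j fun hf ↦ (Nat.lt_succ_self j).trans (hj hf)
  rw [List.Ico.eq_cons (Nat.nth_lt_nth' (Nat.lt_succ_self j) hj),
    List.filter_cons_of_neg (by simpa using hmem), List.filter_eq_self]
  intro x hx
  obtain ⟨hlt, hgt⟩ := List.Ico.mem.1 hx
  have hx : ¬ p x := fun h ↦ Nat.not_le_of_lt hlt (Nat.le_nth_of_lt_nth_succ hgt h)
  simpa using hx

theorem flatMap_range_replicate_nth_gap (hk : ∀ hf : (Set.ofPred p).Finite, k < hf.toFinset.card)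
    (c : ℕ → α) :
    (List.range k).flatMap
        (fun r ↦ List.replicate (Nat.nth p (r + 1) - Nat.nth p r - 1) (c r)) =
      ((List.Ico (Nat.nth p 0) (Nat.nth p k)).filter (¬ p ·)).map
        fun z ↦ c (Nat.count p z - 1) := by
  induction k with
  | zero => simp
  | succ k ih =>
    have hk' : ∀ hf : (Set.ofPred p).Finite, k < hf.toFinset.card :=
      fun hf ↦ (Nat.lt_succ_self k).trans (hk hf)
    have hgap : (List.Ico (Nat.nth p k + 1) (Nat.nth p (k + 1))).map
        (fun z ↦ c (Nat.count p z - 1)) =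
          List.replicate (Nat.nth p (k + 1) - Nat.nth p k - 1) (c k) := by
      rw [Nat.sub_sub, ← List.Ico.length, List.map_eq_replicate_iff]
      intro z hz
      obtain ⟨hlt, hgt⟩ := List.Ico.mem.1 hz
      rw [count_eq_of_nth_lt_of_le_nth_succ hk hlt hgt.le, Nat.add_sub_cancel]
    rw [List.range_succ, List.flatMap_append, ih hk', List.flatMap_singleton, ← hgap,
      ← filter_not_Ico_nth_succ hk, ← List.map_append, ← List.filter_append,
      List.Ico.append_consecutive (Nat.nth_le_nth' k.zero_le hk')
        (Nat.nth_le_nth' k.le_succ hk)]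

end Nth

section SortedFinset

variable {α : Type*} [LinearOrder α] {s : Finset α} {l : List α} {a b c d m : α}

theorem sort_eq_of_pairwise_lt (hl : l.Pairwise (· < ·)) (h : ∀ x, x ∈ l ↔ x ∈ s) :
    s.sort = l := by
  obtain rfl : l.toFinset = s := by ext x; simp [h]
  exact (List.toFinset_sort _ (hl.imp ne_of_lt)).2 (hl.imp le_of_lt)

theorem sort_insert_of_forall_lt (h : ∀ x ∈ s, x < m) :
    (insert m s).sort = s.sort ++ [m] := by
  refine sort_eq_of_pairwise_lt ?_ (by simp [or_comm])
  exact List.pairwise_append.2 ⟨s.sortedLT_sort.pairwise, List.pairwise_singleton _ _, by simpa⟩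

theorem sort_pair (hab : a < b) : ({a, b} : Finset α).sort = [a, b] :=
  sort_eq_of_pairwise_lt (by simpa) (by simp)

theorem sort_triple (hab : a < b) (hbc : b < c) :
    ({a, b, c} : Finset α).sort = [a, b, c] :=
  sort_eq_of_pairwise_lt (by simp [hab, hbc, hab.trans hbc]) (by simp)

theorem notMem_pair_of_lt_of_lt (hac : a < c) (hcd : c < d) : a ∉ ({c, d} : Finset α) := by
  simp [hac.ne, (hac.trans hcd).ne]

theorem pair_ne_pair_of_lt_of_lt (hac : a < c) (hcd : c < d) : ({a, b} : Finset α) ≠ {c, d} :=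
  fun e ↦ notMem_pair_of_lt_of_lt hac hcd (e ▸ Finset.mem_insert_self a {b})

theorem exists_lt_of_card_eq_two (hs : s.card = 2) :
    ∃ a b, a < b ∧ s = {a, b} := by
  obtain ⟨a, b, hab, rfl⟩ := Finset.card_eq_two.1 hs
  rcases hab.lt_or_gt with hab | hba
  · exact ⟨a, b, hab, rfl⟩
  · exact ⟨b, a, hba, Finset.pair_comm a b⟩

theorem exists_lt_lt_of_card_eq_three (hs : s.card = 3) :
    ∃ a b c, a < b ∧ b < c ∧ s = {a, b, c} := by
  obtain ⟨a, b, c, habc⟩ := List.length_eq_three.1 (s.length_sort (· ≤ ·) |>.trans hs)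
  have hlt := s.sortedLT_sort.pairwise
  rw [habc] at hlt
  obtain ⟨hab, hbc⟩ := List.pairwise_cons.1 hlt
  refine ⟨a, b, c, hab b (by simp), List.rel_of_pairwise_cons hbc (by simp), ?_⟩
  simpa [habc] using (s.sort_toFinset (· ≤ ·)).symm

end SortedFinset

section SmallFinsets

variable {α : Type*}

theorem mem_of_sdiff_eq_pair [DecidableEq α] {t u : Finset α} {p q x : α}
    (htu : t \ u = {p, q}) (hx : x ∈ t) (hxp : x ≠ p) (hxq : x ≠ q) : x ∈ u := by
  by_contra hxu
  have hpq : x ∈ ({p, q} : Finset α) := htu ▸ Finset.mem_sdiff.2 ⟨hx, hxu⟩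
  simp [hxp, hxq] at hpq

theorem eq_singleton_or_eq_pair_of_sum_card_sub_one [DecidableEq α] {S : Finset (Finset α)}
    (hS : ∀ β ∈ S, 2 ≤ β.card) (hsum : ∑ β ∈ S, (β.card - 1) = 2) :
    (∃ β, S = {β} ∧ β.card = 3) ∨ ∃ β γ, β ≠ γ ∧ S = {β, γ} ∧ β.card = 2 ∧ γ.card = 2 := by
  have hle : S.card ≤ 2 := by
    rw [← hsum, Finset.card_eq_sum_ones]
    exact Finset.sum_le_sum fun β hβ ↦ Nat.le_sub_one_of_lt (hS β hβ)
  interval_cases hcard : S.card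
  · simp [Finset.card_eq_zero.1 hcard] at hsum
  · obtain ⟨β, rfl⟩ := Finset.card_eq_one.1 hcard
    rw [Finset.sum_singleton] at hsum
    exact .inl ⟨β, rfl, by omega⟩
  · obtain ⟨β, γ, hne, rfl⟩ := Finset.card_eq_two.1 hcard
    rw [Finset.sum_pair hne] at hsum
    have hβ := hS β (by simp)
    have hγ := hS γ (by simp)
    exact .inr ⟨β, γ, hne, rfl, by omega, by omega⟩

end SmallFinsets

section SortNth

variable {s : Finset ℕ}

theorem sort_getD_eq_nth (s : Finset ℕ) (i : ℕ) :
    s.sort.getD i 0 = Nat.nth (· ∈ s) i := by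
  have hs : (Set.ofPred (· ∈ s)).Finite := s.finite_toSet
  rw [Nat.nth_eq_getD_sort hs, show hs.toFinset = s from s.finite_toSet_toFinset]

theorem sort_eq_map_nth (s : Finset ℕ) :
    s.sort = (List.range s.card).map (Nat.nth (· ∈ s)) := by
  refine List.ext_getElem (by simp) fun i hi _ ↦ ?_
  rw [List.getElem_map, List.getElem_range, ← sort_getD_eq_nth, List.getD_eq_getElem _ _ hi]

theorem nth_insert_card {m : ℕ} (h : ∀ x ∈ s, x < m) :
    Nat.nth (· ∈ insert m s) s.card = m := by
  rw [← sort_getD_eq_nth, sort_insert_of_forall_lt h, ← s.length_sort (· ≤ ·),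
    List.getD_append_right _ _ _ _ le_rfl, Nat.sub_self, List.getD_cons_zero]

theorem count_mem_insert_of_le {m z : ℕ} (hz : z ≤ m) :
    Nat.count (· ∈ insert m s) z = Nat.count (· ∈ s) z := by
  simp only [Nat.count_eq_card_filter_range]
  congr 1
  ext x
  grind

theorem count_mem_add_card_filter_sdiff {n z : ℕ} (hs : s ⊆ Finset.Icc 1 n) (hz : 1 ≤ z)
    (hzn : z ≤ n + 1) :
    Nat.count (· ∈ s) z + ((Finset.Icc 1 n \ s).filter (· < z)).card + 1 = z := by
  have hin : (Finset.range z).filter (· ∈ s) = (Finset.Ico 1 z).filter (· ∈ s) := by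
    ext x
    have := @hs x
    grind
  have hout : (Finset.Icc 1 n \ s).filter (· < z) = (Finset.Ico 1 z).filter (· ∉ s) := by
    ext x
    grind
  rw [Nat.count_eq_card_filter_range, hin, hout, Finset.card_filter_add_card_filter_not,
    Nat.card_Ico, Nat.sub_add_cancel hz]

end SortNth

section MinMax

variable {s : Finset ℕ} {m : ℕ}

theorem fmax_eq_of_isGreatest (h : IsGreatest (s : Set ℕ) m) : fmax s = m :=
  le_antisymm (Finset.sup_le h.2) (Finset.le_sup (f := id) h.1)

theorem fmin_eq_of_isLeast (h : IsLeast (s : Set ℕ) m) : fmin s = m := by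
  rw [fmin, dif_pos ⟨m, h.1⟩]
  exact (s.isLeast_min' _).unique h

theorem fmax_mem (h : s.Nonempty) : fmax s ∈ s := by
  rw [fmax_eq_of_isGreatest (s.isGreatest_max' h)]
  exact s.max'_mem h

theorem fmin_mem (h : s.Nonempty) : fmin s ∈ s := by
  rw [fmin_eq_of_isLeast (s.isLeast_min' h)]
  exact s.min'_mem h

variable {a b c : ℕ}

theorem fmax_pair (hab : a < b) : fmax {a, b} = b :=
  fmax_eq_of_isGreatest (by simp [IsGreatest, upperBounds, hab.le])

theorem fmin_pair (hab : a < b) : fmin {a, b} = a :=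
  fmin_eq_of_isLeast (by simp [IsLeast, lowerBounds, hab.le])

theorem fmax_triple (hab : a < b) (hbc : b < c) : fmax {a, b, c} = c :=
  fmax_eq_of_isGreatest (by simp [IsGreatest, upperBounds, hbc.le, (hab.trans hbc).le])

theorem fmin_triple (hab : a < b) (hbc : b < c) : fmin {a, b, c} = a :=
  fmin_eq_of_isLeast (by simp [IsLeast, lowerBounds, hab.le, (hab.trans hbc).le])

end MinMax

namespace SetPartition

variable {n : ℕ} (P : SetPartition n) {f : Finset ℕ → ℕ} {β : Finset ℕ} {x : ℕ}

theorem nonempty_of_mem (hβ : β ∈ P.blocks) : β.Nonempty :=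
  Finset.nonempty_iff_ne_empty.2 fun h ↦ P.not_empty_mem (h ▸ hβ)

theorem mem_Icc_of_mem (hβ : β ∈ P.blocks) (hx : x ∈ β) : x ∈ Finset.Icc 1 n :=
  (P.cover x).2 ⟨β, hβ, hx⟩

theorem eq_of_mem_of_mem {γ : Finset ℕ} (hβ : β ∈ P.blocks) (hγ : γ ∈ P.blocks) (hxβ : x ∈ β)
    (hxγ : x ∈ γ) : β = γ := by
  by_contra hne
  exact Finset.disjoint_left.1 (P.disjoint β hβ γ hγ hne) hxβ hxγ

theorem fmax_mem_of_mem (hβ : β ∈ P.blocks) : fmax β ∈ β := fmax_mem (P.nonempty_of_mem hβ)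

theorem fmin_mem_of_mem (hβ : β ∈ P.blocks) : fmin β ∈ β := fmin_mem (P.nonempty_of_mem hβ)

theorem image_subset_Icc (hf : ∀ β ∈ P.blocks, f β ∈ β) :
    P.blocks.image f ⊆ Finset.Icc 1 n :=
  Finset.image_subset_iff.2 fun β hβ ↦ P.mem_Icc_of_mem hβ (hf β hβ)

theorem card_image (hf : ∀ β ∈ P.blocks, f β ∈ β) :
    (P.blocks.image f).card = P.blocks.card :=
  Finset.card_image_of_injOn fun β hβ γ hγ h ↦
    P.eq_of_mem_of_mem hβ hγ (hf β hβ) (h ▸ hf γ hγ)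

theorem Icc_sdiff_image (hf : ∀ β ∈ P.blocks, f β ∈ β) :
    Finset.Icc 1 n \ P.blocks.image f = (nsBlocks P.blocks).biUnion fun β ↦ β.erase (f β) := by
  ext x
  simp only [Finset.mem_sdiff, Finset.mem_image, Finset.mem_biUnion, Finset.mem_erase, nsBlocks,
    Finset.mem_filter]
  constructor
  · rintro ⟨hx, hxf⟩
    obtain ⟨β, hβ, hxβ⟩ := (P.cover x).1 hx
    have hne : x ≠ f β := fun h ↦ hxf ⟨β, hβ, h.symm⟩
    exact ⟨β, ⟨hβ, Finset.one_lt_card.2 ⟨x, hxβ, f β, hf β hβ, hne⟩⟩, hne, hxβ⟩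
  · rintro ⟨β, ⟨hβ, -⟩, hne, hxβ⟩
    refine ⟨P.mem_Icc_of_mem hβ hxβ, ?_⟩
    rintro ⟨γ, hγ, rfl⟩
    exact hne (congrArg f (P.eq_of_mem_of_mem hγ hβ (hf γ hγ) hxβ))

theorem sum_card_nsBlocks_add_card :
    ∑ β ∈ nsBlocks P.blocks, (β.card - 1) + P.blocks.card = n := by
  have hns : ∑ β ∈ nsBlocks P.blocks, (β.card - 1) = ∑ β ∈ P.blocks, (β.card - 1) := by
    refine Finset.sum_subset (Finset.filter_subset _ _) fun β hβ h ↦ ?_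
    have : ¬ 2 ≤ β.card := fun hc ↦ h (Finset.mem_filter.2 ⟨hβ, hc⟩)
    omega
  have hunion : P.blocks.biUnion id = Finset.Icc 1 n := by
    ext x
    simp [P.cover x]
  calc ∑ β ∈ nsBlocks P.blocks, (β.card - 1) + P.blocks.card
      = ∑ β ∈ P.blocks, (β.card - 1 + 1) := by
        rw [hns, Finset.sum_add_distrib, Finset.card_eq_sum_ones]
    _ = ∑ β ∈ P.blocks, β.card :=
        Finset.sum_congr rfl fun β hβ ↦ Nat.sub_add_cancel (P.nonempty_of_mem hβ).card_pos
    _ = (Finset.Icc 1 n).card := by rw [← hunion, Finset.card_biUnion (t := id) P.disjoint]; rfl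
    _ = n := by simp

end SetPartition

section CandidateArcs

variable {n : ℕ}

/-- The right endpoint of the candidate arc belonging to the non-minimum `z`: if exactly `r` block
minima are smaller than `z`, it is the block maximum `c_r`. Since `z` lies between `m_r` and
`m_{r+1}`, letting `z` run through the non-minima repeats `c_r` exactly `ν_r` times. -/
noncomputable def arcEnd (bs : Finset (Finset ℕ)) (z : ℕ) : ℕ :=
  Nat.nth (· ∈ bs.image fmax) (Nat.count (· ∈ bs.image fmin) z - 1)

theorem repeatEach_eq_flatMap (l : List (ℕ × ℕ)) :
    repeatEach l = l.flatMap fun p ↦ List.replicate p.2 p.1 := by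
  induction l with
  | nil => rfl
  | cons p l ih => rw [repeatEach, ih, List.flatMap_cons]

theorem nuList_eq_map_nth {bs : Finset (Finset ℕ)} (h : bs.image fmin ⊆ Finset.Icc 1 n) :
    nuList n bs = (List.range (bs.image fmin).card).map fun r ↦
      Nat.nth (· ∈ insert (n + 1) (bs.image fmin)) (r + 1) -
        Nat.nth (· ∈ insert (n + 1) (bs.image fmin)) r - 1 := by
  simp only [nuList, ← sort_getD_eq_nth]
  rw [sort_insert_of_forall_lt fun x hx ↦ Nat.lt_succ_of_le (Finset.mem_Icc.1 (h hx)).2]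

theorem SetPartition.isLeast_one_insert_image_fmin (P : SetPartition n) :
    IsLeast (Set.ofPred (· ∈ insert (n + 1) (P.blocks.image fmin))) 1 := by
  refine ⟨Finset.mem_insert.2 ?_, fun x hx ↦ ?_⟩
  · rcases n.eq_zero_or_pos with rfl | hn
    · exact .inl rfl
    · obtain ⟨β, hβ, h1⟩ := (P.cover 1).1 (Finset.mem_Icc.2 ⟨le_rfl, hn⟩)
      exact .inr (Finset.mem_image.2 ⟨β, hβ, fmin_eq_of_isLeast
        ⟨h1, fun x hx ↦ (Finset.mem_Icc.1 (P.mem_Icc_of_mem hβ hx)).1⟩⟩)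
  · rcases Finset.mem_insert.1 hx with rfl | hx
    · exact Nat.le_add_left 1 n
    · exact (Finset.mem_Icc.1 (P.image_subset_Icc (fun _ ↦ P.fmin_mem_of_mem) hx)).1

theorem SetPartition.ysList_eq_map_arcEnd (P : SetPartition n) :
    ysList n P.blocks =
      (Finset.Icc 1 n \ P.blocks.image fmin).sort.map (arcEnd P.blocks) := by
  set mins := P.blocks.image fmin
  -- `T` lists `m_1 < … < m_h < m_{h+1} = n + 1`.
  set T := insert (n + 1) mins
  have hsub : mins ⊆ Finset.Icc 1 n := P.image_subset_Icc fun _ ↦ P.fmin_mem_of_mem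
  have hcard : (P.blocks.image fmax).card = mins.card := by
    rw [P.card_image fun _ ↦ P.fmax_mem_of_mem, P.card_image fun _ ↦ P.fmin_mem_of_mem]
  have hlt : ∀ x ∈ mins, x < n + 1 := fun x hx ↦
    Nat.lt_succ_of_le (Finset.mem_Icc.1 (hsub hx)).2
  have hfirst : Nat.nth (· ∈ T) 0 = 1 :=
    Nat.nth_zero.trans P.isLeast_one_insert_image_fmin.csInf_eq
  have hcard_lt : ∀ hf : (Set.ofPred (· ∈ T)).Finite, mins.card < hf.toFinset.card := fun hf ↦ by
    rw [show hf.toFinset = T from T.finite_toSet_toFinset,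
      Finset.card_insert_of_notMem fun h ↦ (hlt _ h).false]
    exact Nat.lt_succ_self _
  rw [ysList, sort_eq_map_nth, nuList_eq_map_nth hsub, hcard, List.zip_map', repeatEach_eq_flatMap,
    List.flatMap_map, flatMap_range_replicate_nth_gap hcard_lt, hfirst, nth_insert_card hlt]
  have hsort : (Finset.Icc 1 n \ mins).sort = (List.Ico 1 (n + 1)).filter (· ∉ T) := by
    refine sort_eq_of_pairwise_lt ((List.Ico.pairwise_lt _ _).filter _) fun x ↦ ?_
    grind [List.Ico.mem]
  rw [hsort]
  refine List.map_congr_left fun z hz ↦ ?_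
  rw [count_mem_insert_of_le (List.Ico.mem.1 (List.mem_of_mem_filter hz)).2.le, arcEnd]

end CandidateArcs

section Mingarc

variable {n : ℕ} {P : SetPartition n} {a b c d : ℕ}

theorem SetPartition.xsList_eq_sort (P : SetPartition n) :
    xsList n P.blocks = (Finset.Icc 1 n \ P.blocks.image fmax).sort := by
  rw [xsList, Finset.filter_notMem_eq_sdiff]

/- The hypothesis `hzm` says that there is one maximum fewer below `m` than there are minima below
`z`, with both sides moved so that no subtraction occurs. -/
theorem SetPartition.arcEnd_eq_of_card_filter (P : SetPartition n) {z m : ℕ}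
    (hz : z ∈ Finset.Icc 1 n) (hm : m ∈ P.blocks.image fmax)
    (hzm : z + ((Finset.Icc 1 n \ P.blocks.image fmax).filter (· < m)).card =
      m + ((Finset.Icc 1 n \ P.blocks.image fmin).filter (· < z)).card + 1) :
    arcEnd P.blocks z = m := by
  have hmax := P.image_subset_Icc fun _ ↦ P.fmax_mem_of_mem
  have hmin := P.image_subset_Icc fun _ ↦ P.fmin_mem_of_mem
  have hm' := Finset.mem_Icc.1 (hmax hm)
  have hz' := Finset.mem_Icc.1 hz
  have hcm := count_mem_add_card_filter_sdiff hmax hm'.1 (Nat.le_succ_of_le hm'.2)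
  have hcz := count_mem_add_card_filter_sdiff hmin hz'.1 (Nat.le_succ_of_le hz'.2)
  have hcount : Nat.count (· ∈ P.blocks.image fmin) z - 1 =
      Nat.count (· ∈ P.blocks.image fmax) m := by omega
  rw [arcEnd, hcount, Nat.nth_count hm]

section PairOfArcs

variable {p q r s : ℕ}

theorem SetPartition.arcEnd_fst (P : SetPartition n) (hpq : p < q) (hrs : r < s) (hpr : p < r)
    (hmax : Finset.Icc 1 n \ P.blocks.image fmax = {p, q})
    (hmin : Finset.Icc 1 n \ P.blocks.image fmin = {r, s}) :
    arcEnd P.blocks r = if q ≤ r then r + 1 else r := by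
  have hsub : {r, s} ⊆ Finset.Icc 1 n := hmin ▸ Finset.sdiff_subset
  have hr : r ∈ Finset.Icc 1 n := hsub (by simp)
  have hs : s ∈ Finset.Icc 1 n := hsub (by simp)
  rw [Finset.mem_Icc] at hs
  split_ifs with hqr
  · refine P.arcEnd_eq_of_card_filter hr (mem_of_sdiff_eq_pair hmax ?_ ?_ ?_) ?_
    · exact Finset.mem_Icc.2 (by omega)
    · omega
    · omega
    · simp [hmax, hmin, Finset.filter_insert, Finset.filter_singleton, hrs.not_gt, hqr, hpr.le,
        hpq.ne]
  · refine P.arcEnd_eq_of_card_filter hr (mem_of_sdiff_eq_pair hmax hr hpr.ne' (by omega)) ?_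
    simp [hmax, hmin, Finset.filter_insert, Finset.filter_singleton, hrs.not_gt, hpr,
      show ¬ q < r by omega]

theorem SetPartition.arcEnd_snd (P : SetPartition n) (hpq : p < q) (hrs : r < s) (hqs : q < s)
    (hmax : Finset.Icc 1 n \ P.blocks.image fmax = {p, q})
    (hmin : Finset.Icc 1 n \ P.blocks.image fmin = {r, s}) : arcEnd P.blocks s = s := by
  have hsub : {r, s} ⊆ Finset.Icc 1 n := hmin ▸ Finset.sdiff_subset
  have hs : s ∈ Finset.Icc 1 n := hsub (by simp)
  refine P.arcEnd_eq_of_card_filter hs (mem_of_sdiff_eq_pair hmax hs (hpq.trans hqs).ne' hqs.ne') ?_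
  simp [hmax, hmin, Finset.filter_insert, Finset.filter_singleton, hqs, hrs, hpq.trans hqs,
    hpq.ne]

theorem SetPartition.mingarc_eq_ite (P : SetPartition n) (hpq : p < q) (hrs : r < s)
    (hpr : p < r) (hqs : q < s) (hmax : Finset.Icc 1 n \ P.blocks.image fmax = {p, q})
    (hmin : Finset.Icc 1 n \ P.blocks.image fmin = {r, s}) :
    mingarc n P.blocks = if q ≤ r then n - (r + 1) else (n - r) + (n - s) := by
  rw [mingarc, P.xsList_eq_sort, P.ysList_eq_map_arcEnd, hmax, hmin, sort_pair hpq, sort_pair hrs,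
    List.map_cons, List.map_singleton, P.arcEnd_fst hpq hrs hpr hmax hmin,
    P.arcEnd_snd hpq hrs hqs hmax hmin]
  split_ifs with hqr
  · simp [greedyArcs, show ¬ r + 1 < q by omega]
  · simp [greedyArcs, show r < q by omega]

end PairOfArcs

theorem mingarc_of_nsBlocks_eq_triple (hab : a < b) (hbc : b < c)
    (hP : nsBlocks P.blocks = {{a, b, c}}) : mingarc n P.blocks = n - b - 1 := by
  have hmax : Finset.Icc 1 n \ P.blocks.image fmax = {a, b} := by
    rw [P.Icc_sdiff_image fun _ ↦ P.fmax_mem_of_mem, hP, Finset.singleton_biUnion,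
      fmax_triple hab hbc]
    grind
  have hmin : Finset.Icc 1 n \ P.blocks.image fmin = {b, c} := by
    rw [P.Icc_sdiff_image fun _ ↦ P.fmin_mem_of_mem, hP, Finset.singleton_biUnion,
      fmin_triple hab hbc]
    grind
  rw [P.mingarc_eq_ite hab hbc hab hbc hmax hmin, if_pos le_rfl, Nat.sub_sub]

theorem Icc_sdiff_image_fmax_of_nsBlocks_eq_pairs (hab : a < b) (hcd : c < d)
    (hP : nsBlocks P.blocks = {{a, b}, {c, d}}) :
    Finset.Icc 1 n \ P.blocks.image fmax = {a, c} := by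
  rw [P.Icc_sdiff_image fun _ ↦ P.fmax_mem_of_mem, hP, Finset.biUnion_insert,
    Finset.singleton_biUnion, fmax_pair hab, fmax_pair hcd]
  grind

theorem Icc_sdiff_image_fmin_of_nsBlocks_eq_pairs (hab : a < b) (hcd : c < d)
    (hP : nsBlocks P.blocks = {{a, b}, {c, d}}) :
    Finset.Icc 1 n \ P.blocks.image fmin = {b, d} := by
  rw [P.Icc_sdiff_image fun _ ↦ P.fmin_mem_of_mem, hP, Finset.biUnion_insert,
    Finset.singleton_biUnion, fmin_pair hab, fmin_pair hcd]
  grind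

theorem mingarc_of_nsBlocks_eq_disjoint_pairs (hab : a < b) (hbc : b < c) (hcd : c < d)
    (hP : nsBlocks P.blocks = {{a, b}, {c, d}}) : mingarc n P.blocks = 2 * n - b - d := by
  have hmin := Icc_sdiff_image_fmin_of_nsBlocks_eq_pairs hab hcd hP
  have hsub : {b, d} ⊆ Finset.Icc 1 n := hmin ▸ Finset.sdiff_subset
  have hdn : d ≤ n := (Finset.mem_Icc.1 (hsub (by simp))).2
  rw [P.mingarc_eq_ite (hab.trans hbc) (hbc.trans hcd) hab hcd
    (Icc_sdiff_image_fmax_of_nsBlocks_eq_pairs hab hcd hP) hmin, if_neg hbc.not_ge]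
  omega

theorem mingarc_of_nsBlocks_eq_nested_pairs (hac : a < c) (hcd : c < d) (hdb : d < b)
    (hP : nsBlocks P.blocks = {{a, b}, {c, d}}) : mingarc n P.blocks = n - d - 1 := by
  have hab := hac.trans (hcd.trans hdb)
  rw [P.mingarc_eq_ite hac hdb (hac.trans hcd) (hcd.trans hdb)
    (Icc_sdiff_image_fmax_of_nsBlocks_eq_pairs hab hcd hP)
    ((Icc_sdiff_image_fmin_of_nsBlocks_eq_pairs hab hcd hP).trans (Finset.pair_comm b d)),
    if_pos hcd.le, Nat.sub_sub]

end Mingarc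

section Skew

variable {bs : Finset (Finset ℕ)} {a b c d : ℕ}

theorem skew_of_nsBlocks_eq_triple (hab : a < b) (hbc : b < c) (h : nsBlocks bs = {{a, b, c}}) :
    skew bs = b - 2 := by
  have hA : blockContaining {{a, b, c}} a = {a, b, c} := by
    simp [blockContaining, Finset.filter_singleton]
  have hquad : blockQuad bs = (a, b, b, c) := by
    simp [blockQuad, h, fmin_triple hab hbc, hA, sort_triple hab hbc]
  simp [skew, hquad]

theorem skew_of_nsBlocks_eq_pairs (hab : a < b) (hcd : c < d) (hac : a < c)
    (h : nsBlocks bs = {{a, b}, {c, d}}) : skew bs = if b < c then c - 2 + a else c - 2 := by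
  have hne : ({a, b} : Finset ℕ) ≠ {c, d} := pair_ne_pair_of_lt_of_lt hac hcd
  have hmin : fmin (({{a, b}, {c, d}} : Finset (Finset ℕ)).sup id) = a :=
    fmin_eq_of_isLeast ⟨by simp, by simp [lowerBounds, hab.le, hac.le, (hac.trans hcd).le]⟩
  have hA : blockContaining {{a, b}, {c, d}} a = {a, b} := by
    simp [blockContaining, Finset.filter_insert, Finset.filter_singleton,
      notMem_pair_of_lt_of_lt hac hcd]
  have hB : (({{a, b}, {c, d}} : Finset (Finset ℕ)).erase {a, b}).sup id = {c, d} := by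
    rw [Finset.erase_insert (by simpa using hne), Finset.sup_singleton, id]
  have hquad : blockQuad bs = (a, b, c, d) := by
    rw [blockQuad, h]
    simp only [hmin, hA, hB, Finset.card_pair hne, fmin_pair hab, fmax_pair hab, fmin_pair hcd,
      fmax_pair hcd]
    rfl
  simp [skew, hquad]

theorem SetPartition.nsBlocks_flipBlocks {n : ℕ} (P : SetPartition n) :
    nsBlocks (flipBlocks n P.blocks) = flipBlocks n (nsBlocks P.blocks) := by
  rw [nsBlocks, nsBlocks, flipBlocks, flipBlocks, Finset.filter_image]
  congr 1
  refine Finset.filter_congr fun β hβ ↦ ?_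
  rw [Finset.card_image_of_injOn fun x hx y hy hxy ↦ ?_]
  have hxn := Finset.mem_Icc.1 (P.mem_Icc_of_mem hβ hx)
  have hyn := Finset.mem_Icc.1 (P.mem_Icc_of_mem hβ hy)
  change n + 1 - x = n + 1 - y at hxy
  omega

theorem flipBlocks_singleton_triple (n a b c : ℕ) :
    flipBlocks n {{a, b, c}} = {{n + 1 - c, n + 1 - b, n + 1 - a}} := by
  simp only [flipBlocks, Finset.image_singleton, Finset.image_insert]
  grind

theorem flipBlocks_pairs (n a b c d : ℕ) :
    flipBlocks n {{a, b}, {c, d}} =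
      {{n + 1 - b, n + 1 - a}, {n + 1 - d, n + 1 - c}} := by
  simp only [flipBlocks, Finset.image_singleton, Finset.image_insert]
  rw [Finset.pair_comm (n + 1 - a), Finset.pair_comm (n + 1 - c)]

end Skew

section Classification

variable {n : ℕ} {bs T : Finset (Finset ℕ)} {a b c d : ℕ}

theorem mem_nsBlocks {β : Finset ℕ} : β ∈ nsBlocks bs ↔ β ∈ bs ∧ 2 ≤ β.card :=
  Finset.mem_filter

theorem nsBlocks_eq_of_subset_of_sum_le (hT : T ⊆ nsBlocks bs)
    (h : ∑ β ∈ nsBlocks bs, (β.card - 1) ≤ ∑ β ∈ T, (β.card - 1)) : nsBlocks bs = T := by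
  refine (hT.antisymm fun β hβ ↦ ?_).symm
  by_contra hβT
  have hpos : 0 < β.card - 1 := Nat.sub_pos_of_lt (mem_nsBlocks.1 hβ).2
  exact h.not_gt (Finset.sum_lt_sum_of_subset hT hβ hβT hpos fun _ _ _ ↦ Nat.zero_le _)

theorem NC.sum_card_nsBlocks (hn : 3 ≤ n) (π : NC n 3) :
    ∑ β ∈ nsBlocks π.val.blocks, (β.card - 1) = 2 := by
  have hsum := π.val.sum_card_nsBlocks_add_card
  rw [π.prop.2] at hsum
  omega

theorem NC.nsBlocks_eq_triple (hn : 3 ≤ n) (π : NC n 3) (hab : a < b) (hbc : b < c)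
    (h : {a, b, c} ∈ π.val.blocks) : nsBlocks π.val.blocks = {{a, b, c}} := by
  have hcard : ({a, b, c} : Finset ℕ).card = 3 :=
    Finset.card_triple_eq_three_iff.2 ⟨hab.ne, (hab.trans hbc).ne, hbc.ne⟩
  refine nsBlocks_eq_of_subset_of_sum_le ?_ ?_
  · simpa [mem_nsBlocks, hcard] using h
  · simp [NC.sum_card_nsBlocks hn π, hcard]

theorem NC.nsBlocks_eq_pairs (hn : 3 ≤ n) (π : NC n 3) (hab : a < b) (hcd : c < d) (hac : a < c)
    (h : {a, b} ∈ π.val.blocks) (h' : {c, d} ∈ π.val.blocks) :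
    nsBlocks π.val.blocks = {{a, b}, {c, d}} := by
  have hne : ({a, b} : Finset ℕ) ≠ {c, d} := pair_ne_pair_of_lt_of_lt hac hcd
  refine nsBlocks_eq_of_subset_of_sum_le ?_ ?_
  · simp [Finset.insert_subset_iff, mem_nsBlocks, h, h', hab.ne, hcd.ne]
  · simp [NC.sum_card_nsBlocks hn π, Finset.sum_pair hne, hab.ne, hcd.ne]

theorem disjoint_or_nested_of_isNoncrossing (hbs : IsNoncrossing bs) (hac : a < c)
    (h : {a, b} ∈ bs) (h' : {c, d} ∈ bs)
    (hdisj : Disjoint ({a, b} : Finset ℕ) {c, d}) : b < c ∨ d < b := by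
  by_contra! hcross
  have hbc : b ≠ c := fun e ↦ Finset.disjoint_left.1 hdisj (by simp : b ∈ _) (by simp [e])
  have hbd : b ≠ d := fun e ↦ Finset.disjoint_left.1 hdisj (by simp : b ∈ _) (by simp [e])
  have heq : ({a, b} : Finset ℕ) = {c, d} :=
    hbs a c b d hac (lt_of_le_of_ne hcross.1 hbc.symm) (lt_of_le_of_ne hcross.2 hbd)
      _ h _ h' (by simp) (by simp) (by simp) (by simp)
  exact Finset.disjoint_left.1 hdisj (Finset.mem_insert_self a {b}) (heq ▸ by simp)

theorem NC.nsBlocks_cases (hn : 3 ≤ n) (π : NC n 3) :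
    (∃ a b c, a < b ∧ b < c ∧ nsBlocks π.val.blocks = {{a, b, c}}) ∨
    (∃ a b c d, a < b ∧ b < c ∧ c < d ∧ nsBlocks π.val.blocks = {{a, b}, {c, d}}) ∨
    (∃ a b c d, a < c ∧ c < d ∧ d < b ∧ nsBlocks π.val.blocks = {{a, b}, {c, d}}) := by
  rcases eq_singleton_or_eq_pair_of_sum_card_sub_one (fun β hβ ↦ (mem_nsBlocks.1 hβ).2)
    (NC.sum_card_nsBlocks hn π) with ⟨β, hns, hβ⟩ | ⟨β, γ, hne, hns, hβ, hγ⟩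
  · obtain ⟨a, b, c, hab, hbc, rfl⟩ := exists_lt_lt_of_card_eq_three hβ
    exact .inl ⟨a, b, c, hab, hbc, hns⟩
  · right
    obtain ⟨a, b, hab, rfl⟩ := exists_lt_of_card_eq_two hβ
    obtain ⟨c, d, hcd, rfl⟩ := exists_lt_of_card_eq_two hγ
    have h : {a, b} ∈ π.val.blocks := (mem_nsBlocks.1 (hns ▸ by simp)).1
    have h' : {c, d} ∈ π.val.blocks := (mem_nsBlocks.1 (hns ▸ by simp)).1
    have hdisj := π.val.disjoint _ h _ h' hne
    wlog hac : a < c generalizing a b c d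
    · have hne_ac : a ≠ c := fun e ↦ Finset.disjoint_left.1 hdisj (by simp : a ∈ _) (by simp [e])
      have hca : c < a := by omega
      exact this c d hcd hγ a b hab hβ hne.symm (hns.trans (Finset.pair_comm _ _)) h' h hdisj.symm
        hca
    rcases disjoint_or_nested_of_isNoncrossing π.prop.1 hac h h' hdisj with hbc | hdb
    · exact .inl ⟨a, b, c, d, hab, hbc, hcd, hns⟩
    · exact .inr ⟨a, b, c, d, hac, hcd, hdb, hns⟩

end Classification

theorem NC.mingarc_eq_skew_flipBlocks {n : ℕ} (hn : 3 ≤ n) (π : NC n 3) :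
    mingarc n π.val.blocks = skew (flipBlocks n π.val.blocks) := by
  have le_of_mem {β : Finset ℕ} {x : ℕ} (hβ : β ∈ nsBlocks π.val.blocks) (hx : x ∈ β) : x ≤ n :=
    (Finset.mem_Icc.1 (π.val.mem_Icc_of_mem (mem_nsBlocks.1 hβ).1 hx)).2
  rcases NC.nsBlocks_cases hn π with ⟨a, b, c, hab, hbc, hns⟩ |
    ⟨a, b, c, d, hab, hbc, hcd, hns⟩ | ⟨a, b, c, d, hac, hcd, hdb, hns⟩
  · have hflip := π.val.nsBlocks_flipBlocks
    rw [hns, flipBlocks_singleton_triple] at hflip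
    have hc : c ≤ n := le_of_mem (β := {a, b, c}) (by simp [hns]) (by simp)
    rw [mingarc_of_nsBlocks_eq_triple hab hbc hns,
      skew_of_nsBlocks_eq_triple (by omega) (by omega) hflip]
    omega
  · have hflip := π.val.nsBlocks_flipBlocks
    rw [hns, flipBlocks_pairs, Finset.pair_comm] at hflip
    have hd : d ≤ n := le_of_mem (β := {c, d}) (by simp [hns]) (by simp)
    rw [mingarc_of_nsBlocks_eq_disjoint_pairs hab hbc hcd hns,
      skew_of_nsBlocks_eq_pairs (by omega) (by omega) (by omega) hflip, if_pos (by omega)]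
    omega
  · have hflip := π.val.nsBlocks_flipBlocks
    rw [hns, flipBlocks_pairs] at hflip
    have hb : b ≤ n := le_of_mem (β := {a, b}) (by simp [hns]) (by simp)
    rw [mingarc_of_nsBlocks_eq_nested_pairs hac hcd hdb hns,
      skew_of_nsBlocks_eq_pairs (by omega) (by omega) (by omega) hflip, if_neg (by omega)]
    omega

/-- Closed form of the mingarc statistic on `NC(n,3)` for `n ≥ 3`:
for a triple block `{a,b,c}` (`a<b<c`), `mingarc π = n - b - 1`; for two disjoint pair
blocks `{a,b}, {c,d}` (`a<b<c<d`), `mingarc π = 2n - b - d`; for nested pair blocks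
`{a,b}, {c,d}` (`a<c<d<b`), `mingarc π = n - d - 1`. Consequently
`mingarc π = skew (flip π)`, where `flip` applies `i ↦ n + 1 - i` to every element. -/
theorem mingarc_closed_form (n : ℕ) (hn : 3 ≤ n) (π : NC n 3) :
    (∀ a b c : ℕ, a < b → b < c → ({a, b, c} : Finset ℕ) ∈ π.val.blocks →
      mingarc n π.val.blocks = n - b - 1) ∧
    (∀ a b c d : ℕ, a < b → b < c → c < d →
      ({a, b} : Finset ℕ) ∈ π.val.blocks → ({c, d} : Finset ℕ) ∈ π.val.blocks →
      mingarc n π.val.blocks = 2 * n - b - d) ∧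
    (∀ a b c d : ℕ, a < c → c < d → d < b →
      ({a, b} : Finset ℕ) ∈ π.val.blocks → ({c, d} : Finset ℕ) ∈ π.val.blocks →
      mingarc n π.val.blocks = n - d - 1) ∧
    mingarc n π.val.blocks = skew (flipBlocks n π.val.blocks) := by
  refine ⟨fun a b c hab hbc h ↦ ?_, fun a b c d hab hbc hcd h h' ↦ ?_,
    fun a b c d hac hcd hdb h h' ↦ ?_, NC.mingarc_eq_skew_flipBlocks hn π⟩
  · exact mingarc_of_nsBlocks_eq_triple hab hbc (NC.nsBlocks_eq_triple hn π hab hbc h)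
  · exact mingarc_of_nsBlocks_eq_disjoint_pairs hab hbc hcd
      (NC.nsBlocks_eq_pairs hn π hab hcd (hab.trans hbc) h h')
  · exact mingarc_of_nsBlocks_eq_nested_pairs hac hcd hdb
      (NC.nsBlocks_eq_pairs hn π (hac.trans (hcd.trans hdb)) hcd hac h h')

end QtN
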